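/- arXiv:2212.05267 — 5 statements merged into one kernel-verified Lean document; each statement's English description precedes it below -/
import Mathlib

section
/- Let n be a natural number and let T : Fin n → Fin n → Fin n → Fin n → ℝ be an algebraic curvature tensor, i.e. T i j k l = -T j i k l, T i j k l = -T i j l k, T i j k l = T k l i j for all indices, and T satisfies the first Bianchi identity T i j k l + T i k l j + T i l j k = 0. Let A, B : Matrix (Fin n) (Fin n) ℝ be symmetric matrices. Define the action of T on A as the second kind by (T̂A) i k = ∑_{j,l} T i j l k * A j l, and define the Kulkarni–Nomizu product (A ⊙ B) i j k l = A i k * B j l + A j l * B i k − A i l * B j k − A j k * B i l. Then ∑_{i,k} (T̂A) i k * B i k = −(1/4) ∑_{i,j,k,l} T i j k l * (A ⊙ B) i j k l. -/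
open Matrix

/-!
Put `S i j k l = A i k * B j l`. Then `A ⊙ B` is the signed sum of the four tensors obtained from
`S` by swapping `i, j` and `k, l`, so pairing it with a tensor `T` antisymmetric in both pairs gives
four equal terms `∑ T * S`. On the other hand `⟨T̂A, B⟩` pairs `T` with `S` after the single swap of
`i` and `j`, which is the source of the minus sign.
-/

section

variable {ι κ R : Type*} [CommRing R]

/-- The Kulkarni–Nomizu product `A ⊙ B`, which is a 4-tensor. The row and column index types may
differ, as for products of double forms. -/
def kulkarniNomizu (A B : Matrix ι κ R) (i j : ι) (k l : κ) : R :=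
  A i k * B j l + A j l * B i k - A i l * B j k - A j k * B i l

variable [Fintype ι] [Fintype κ]

/-- The action `T̂A` of a 4-tensor `T` on a matrix `A`, known as the curvature of the second kind.
With the index order `i j l k` the tensor `T i j k l = δ i k * δ j l - δ i l * δ j k` of the unit
sphere acts as the identity on traceless symmetric matrices. -/
def curvatureSecondKind (T : ι → ι → κ → κ → R) (A : Matrix ι κ R) : Matrix ι κ R :=
  of fun i k ↦ ∑ j, ∑ l, T i j l k * A j l

variable {T : ι → ι → κ → κ → R}

theorem sum_mul_swap_left_of_antisymm (hT : ∀ i j k l, T i j k l = -T j i k l)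
    (S : ι → ι → κ → κ → R) :
    ∑ i, ∑ j, ∑ k, ∑ l, T i j k l * S j i k l =
      -∑ i, ∑ j, ∑ k, ∑ l, T i j k l * S i j k l := by
  simp only [← Finset.sum_neg_distrib, ← neg_mul, ← hT]
  exact Finset.sum_comm

theorem sum_mul_swap_right_of_antisymm (hT : ∀ i j k l, T i j k l = -T i j l k)
    (S : ι → ι → κ → κ → R) :
    ∑ i, ∑ j, ∑ k, ∑ l, T i j k l * S i j l k =
      -∑ i, ∑ j, ∑ k, ∑ l, T i j k l * S i j k l := by
  simp only [← Finset.sum_neg_distrib, ← neg_mul, ← hT]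
  exact Finset.sum_congr rfl fun i _ ↦ Finset.sum_congr rfl fun j _ ↦ Finset.sum_comm

theorem sum_mul_antisymmetrization (hT₁ : ∀ i j k l, T i j k l = -T j i k l)
    (hT₂ : ∀ i j k l, T i j k l = -T i j l k) (S : ι → ι → κ → κ → R) :
    ∑ i, ∑ j, ∑ k, ∑ l, T i j k l * (S i j k l + S j i l k - S i j l k - S j i k l) =
      4 * ∑ i, ∑ j, ∑ k, ∑ l, T i j k l * S i j k l := by
  have swap_left := sum_mul_swap_left_of_antisymm hT₁ S
  have swap_right := sum_mul_swap_right_of_antisymm hT₂ S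
  have swap_both : ∑ i, ∑ j, ∑ k, ∑ l, T i j k l * S j i l k =
      ∑ i, ∑ j, ∑ k, ∑ l, T i j k l * S i j k l := by
    rw [sum_mul_swap_right_of_antisymm hT₂ fun i j k l ↦ S j i k l, swap_left, neg_neg]
  simp only [mul_add, mul_sub, Finset.sum_add_distrib, Finset.sum_sub_distrib]
  rw [swap_left, swap_right, swap_both]
  ring

theorem sum_mul_kulkarniNomizu (hT₁ : ∀ i j k l, T i j k l = -T j i k l)
    (hT₂ : ∀ i j k l, T i j k l = -T i j l k) (A B : Matrix ι κ R) :
    ∑ i, ∑ j, ∑ k, ∑ l, T i j k l * kulkarniNomizu A B i j k l =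
      4 * ∑ i, ∑ j, ∑ k, ∑ l, T i j k l * (A i k * B j l) :=
  sum_mul_antisymmetrization hT₁ hT₂ fun i j k l ↦ A i k * B j l

theorem sum_curvatureSecondKind_mul (hT : ∀ i j k l, T i j k l = -T j i k l)
    (A B : Matrix ι κ R) :
    ∑ i, ∑ k, curvatureSecondKind T A i k * B i k =
      -∑ i, ∑ j, ∑ k, ∑ l, T i j k l * (A i k * B j l) := by
  calc ∑ i, ∑ k, curvatureSecondKind T A i k * B i k
    _ = ∑ i, ∑ l, ∑ j, ∑ k, T i j k l * (A j k * B i l) := by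
      simp only [curvatureSecondKind, of_apply, Finset.sum_mul, mul_assoc]
    _ = ∑ i, ∑ j, ∑ k, ∑ l, T i j k l * (A j k * B i l) :=
      Finset.sum_congr rfl fun i _ ↦
        Finset.sum_comm.trans (Finset.sum_congr rfl fun j _ ↦ Finset.sum_comm)
    _ = -∑ i, ∑ j, ∑ k, ∑ l, T i j k l * (A i k * B j l) :=
      sum_mul_swap_left_of_antisymm hT fun i j k l ↦ A i k * B j l

theorem second_kind_kulkarni_nomizu_general (hT₁ : ∀ i j k l, T i j k l = -T j i k l)
    (hT₂ : ∀ i j k l, T i j k l = -T i j l k) (A B : Matrix ι κ R) :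
    4 * ∑ i, ∑ k, curvatureSecondKind T A i k * B i k =
      -∑ i, ∑ j, ∑ k, ∑ l, T i j k l * kulkarniNomizu A B i j k l := by
  rw [sum_curvatureSecondKind_mul hT₁, sum_mul_kulkarniNomizu hT₁ hT₂, mul_neg]

end

/-- Lemma 2.1: for an algebraic curvature tensor `T` and symmetric matrices `A`, `B`,
`⟨T̂A, B⟩ = -⟨T, A ⊙ B⟩`. -/
theorem second_kind_kulkarni_nomizu (n : ℕ) (T : Fin n → Fin n → Fin n → Fin n → ℝ)
    (hT1 : ∀ i j k l, T i j k l = -T j i k l)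
    (hT2 : ∀ i j k l, T i j k l = -T i j l k)
    (hT3 : ∀ i j k l, T i j k l = T k l i j)
    (hBianchi : ∀ i j k l, T i j k l + T i k l j + T i l j k = 0)
    (A B : Matrix (Fin n) (Fin n) ℝ)
    (hA : Aᵀ = A) (hB : Bᵀ = B) :
    (∑ i, ∑ k, (∑ j, ∑ l, T i j l k * A j l) * B i k) =
      -(1/4) * ∑ i, ∑ j, ∑ k, ∑ l, T i j k l *
        (A i k * B j l + A j l * B i k - A i l * B j k - A j k * B i l) := by
  have h := second_kind_kulkarni_nomizu_general hT1 hT2 A B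
  simp only [curvatureSecondKind, kulkarniNomizu, of_apply] at h
  linear_combination h / 4
end

section
/- Let a, b, c be real numbers with a ≥ b ≥ c and a + b + c = 0. Then a * b * c ≤ (Real.sqrt 6 / 18) * (a^2 + b^2 + c^2)^(3/2), and equality holds if and only if b = c (equivalently, b = c = -a/2). -/
/-!
Let `m ≥ 0` be the scale with `a² + b² + c² = (3/2) m²`, so that the right-hand side is `m³ / 4`.
Since `a + b + c = 0`, we have `3 (m² - a²) = (b - c)²`, hence `|a| ≤ m`, and eliminating `b` and
`c` gives `m³ - 4abc = (m - a) (m + 2a)² ≥ 0`. When `a ≥ 0`, the right side vanishes only for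
`m = a`, that is, for `b = c`.
-/

section CommRing

variable {R : Type*} [CommRing R] {a b c m : R}

theorem sub_sq_eq_three_mul_of_sum_eq_zero (hsum : a + b + c = 0)
    (hm : 2 * (a ^ 2 + b ^ 2 + c ^ 2) = 3 * m ^ 2) :
    (b - c) ^ 2 = 3 * (m ^ 2 - a ^ 2) := by
  linear_combination hm + (a - b - c) * hsum

theorem cube_sub_four_mul_prod_eq_of_sum_eq_zero (hsum : a + b + c = 0)
    (hm : 2 * (a ^ 2 + b ^ 2 + c ^ 2) = 3 * m ^ 2) :
    m ^ 3 - 4 * (a * b * c) = (m - a) * (m + 2 * a) ^ 2 := by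
  have h_four_mul : 4 * (b * c) = a ^ 2 - (b - c) ^ 2 := by
    linear_combination (b + c - a) * hsum
  linear_combination -a * h_four_mul + a * sub_sq_eq_three_mul_of_sum_eq_zero hsum hm

end CommRing

section OrderedRing

variable {R : Type*} [CommRing R] [LinearOrder R] [IsStrictOrderedRing R] {a b c m : R}

theorem le_of_sum_eq_zero_of_two_mul_sum_sq_eq (hsum : a + b + c = 0)
    (hm : 2 * (a ^ 2 + b ^ 2 + c ^ 2) = 3 * m ^ 2) (hm_nonneg : 0 ≤ m) : a ≤ m := by
  refine le_of_sq_le_sq ?_ hm_nonneg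
  linarith [sub_sq_eq_three_mul_of_sum_eq_zero hsum hm, sq_nonneg (b - c)]

theorem eq_iff_of_sum_eq_zero_of_two_mul_sum_sq_eq (hsum : a + b + c = 0)
    (hm : 2 * (a ^ 2 + b ^ 2 + c ^ 2) = 3 * m ^ 2) (hm_nonneg : 0 ≤ m) (ha : 0 ≤ a) :
    m = a ↔ b = c := by
  rw [← pow_left_inj₀ hm_nonneg ha two_ne_zero, ← sub_eq_zero (a := b),
    ← sq_eq_zero_iff (a := b - c), sub_sq_eq_three_mul_of_sum_eq_zero hsum hm]
  simp only [mul_eq_zero, three_ne_zero, false_or, sub_eq_zero]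

theorem four_mul_prod_le_cube_of_sum_eq_zero (hsum : a + b + c = 0)
    (hm : 2 * (a ^ 2 + b ^ 2 + c ^ 2) = 3 * m ^ 2) (hm_nonneg : 0 ≤ m) :
    4 * (a * b * c) ≤ m ^ 3 := by
  rw [← sub_nonneg, cube_sub_four_mul_prod_eq_of_sum_eq_zero hsum hm]
  have h_le : a ≤ m := le_of_sum_eq_zero_of_two_mul_sum_sq_eq hsum hm hm_nonneg
  exact mul_nonneg (sub_nonneg.2 h_le) (sq_nonneg _)

theorem four_mul_prod_eq_cube_iff_of_sum_eq_zero (hsum : a + b + c = 0)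
    (hm : 2 * (a ^ 2 + b ^ 2 + c ^ 2) = 3 * m ^ 2) (hm_nonneg : 0 ≤ m) (ha : 0 ≤ a) :
    4 * (a * b * c) = m ^ 3 ↔ b = c := by
  have h_double_root : m + 2 * a = 0 → m = a := fun h ↦ by linarith
  rw [eq_comm, ← sub_eq_zero, cube_sub_four_mul_prod_eq_of_sum_eq_zero hsum hm, mul_eq_zero,
    sq_eq_zero_iff, sub_eq_zero, or_iff_left_of_imp h_double_root,
    eq_iff_of_sum_eq_zero_of_two_mul_sum_sq_eq hsum hm hm_nonneg ha]

end OrderedRing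

theorem sqrt_six_div_mul_rpow_three_halves {m : ℝ} (hm : 0 ≤ m) :
    √6 / 18 * (3 / 2 * m ^ 2) ^ ((3 : ℝ) / 2) = m ^ 3 / 4 := by
  have h_sqrt : √(3 / 2 * m ^ 2) = √6 / 2 * m := by
    rw [Real.sqrt_eq_iff_mul_self_eq (by positivity) (by positivity)]
    linear_combination -m ^ 2 / 4 * Real.sq_sqrt (show (0 : ℝ) ≤ 6 by norm_num)
  rw [Real.rpow_div_two_eq_sqrt _ (by positivity), h_sqrt, Real.rpow_ofNat]
  linear_combination m ^ 3 / 144 * (√6 ^ 2 + 6) * Real.sq_sqrt (show (0 : ℝ) ≤ 6 by norm_num)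

theorem det_bound_scalar_general {a b c : ℝ} (hsum : a + b + c = 0) :
    a * b * c ≤ √6 / 18 * (a ^ 2 + b ^ 2 + c ^ 2) ^ ((3 : ℝ) / 2) ∧
    (0 ≤ a →
      (a * b * c = √6 / 18 * (a ^ 2 + b ^ 2 + c ^ 2) ^ ((3 : ℝ) / 2) ↔ b = c)) := by
  obtain ⟨m, hm_nonneg, hm⟩ : ∃ m : ℝ, 0 ≤ m ∧ a ^ 2 + b ^ 2 + c ^ 2 = 3 / 2 * m ^ 2 := by
    refine ⟨√(2 / 3 * (a ^ 2 + b ^ 2 + c ^ 2)), Real.sqrt_nonneg _, ?_⟩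
    rw [Real.sq_sqrt (by positivity)]
    ring
  have hm_two : 2 * (a ^ 2 + b ^ 2 + c ^ 2) = 3 * m ^ 2 := by linarith
  rw [hm, sqrt_six_div_mul_rpow_three_halves hm_nonneg, le_div_iff₀' four_pos,
    eq_div_iff four_ne_zero, mul_comm _ (4 : ℝ)]
  exact ⟨four_mul_prod_le_cube_of_sum_eq_zero hsum hm_two hm_nonneg,
    four_mul_prod_eq_cube_iff_of_sum_eq_zero hsum hm_two hm_nonneg⟩

/-- Inequality (2.9): for `a ≥ b ≥ c` summing to zero,
`abc ≤ (√6/18)(a²+b²+c²)^{3/2}`, with equality iff `b = c`. -/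
theorem det_bound_scalar (a b c : ℝ) (hab : a ≥ b) (hbc : b ≥ c)
    (hsum : a + b + c = 0) :
    a * b * c ≤ (Real.sqrt 6 / 18) * (a ^ 2 + b ^ 2 + c ^ 2) ^ ((3 : ℝ) / 2) ∧
    (a * b * c = (Real.sqrt 6 / 18) * (a ^ 2 + b ^ 2 + c ^ 2) ^ ((3 : ℝ) / 2) ↔ b = c) :=
  (det_bound_scalar_general hsum).imp_right fun h ↦ h (by linarith)
end

section
/- Let A be a real symmetric 3 × 3 matrix (A : Matrix (Fin 3) (Fin 3) ℝ with Aᵀ = A) whose trace is zero. Then det A ≤ (Real.sqrt 6 / 18) * (∑_{i,j} (A i j)^2)^(3/2). -/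
open Matrix

/-!
The eigenvalues `x, y, z` of a trace-free Hermitian `3 × 3` matrix are real with sum zero, their
product is the determinant and the sum of their squares is the squared Frobenius norm. The
discriminant of a depressed cubic with three real roots is nonnegative, and in terms of the roots
this says `54 (x y z)² ≤ (x² + y² + z²)³`, because the difference of the two sides is
`2 ((x - y) (y - z) (z - x))²`.
-/

section SumZero

theorem sum_sq_pow_three_sub_prod_sq_of_add_eq_zero {R : Type*} [CommRing R] {x y z : R}
    (h : x + y + z = 0) :
    (x ^ 2 + y ^ 2 + z ^ 2) ^ 3 - 54 * (x * y * z) ^ 2 =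
      2 * ((x - y) * (y - z) * (z - x)) ^ 2 := by
  obtain rfl : z = -x - y := by linear_combination h
  ring

theorem prod_sq_le_sum_sq_pow_three_of_add_eq_zero {R : Type*} [CommRing R] [LinearOrder R]
    [IsStrictOrderedRing R] {x y z : R} (h : x + y + z = 0) :
    54 * (x * y * z) ^ 2 ≤ (x ^ 2 + y ^ 2 + z ^ 2) ^ 3 := by
  rw [← sub_nonneg, sum_sq_pow_three_sub_prod_sq_of_add_eq_zero h]
  positivity

theorem abs_prod_le_sum_sq_rpow_of_add_eq_zero {x y z : ℝ} (h : x + y + z = 0) :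
    |x * y * z| ≤ √6 / 18 * (x ^ 2 + y ^ 2 + z ^ 2) ^ ((3 : ℝ) / 2) := by
  set s := x ^ 2 + y ^ 2 + z ^ 2
  have rpow_sq : (s ^ ((3 : ℝ) / 2)) ^ 2 = s ^ 3 := by
    rw [← Real.rpow_mul_natCast (by positivity), ← Real.rpow_natCast]
    norm_num
  refine abs_le_of_sq_le_sq ?_ (by positivity)
  calc (x * y * z) ^ 2 ≤ s ^ 3 / 54 := by
        linarith [prod_sq_le_sum_sq_pow_three_of_add_eq_zero h]
    _ = (√6 / 18 * s ^ ((3 : ℝ) / 2)) ^ 2 := by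
        rw [mul_pow, rpow_sq, div_pow, Real.sq_sqrt (by norm_num)]
        ring

end SumZero

section FrobeniusNorm

variable {𝕜 m n : Type*} [RCLike 𝕜] [Fintype m] [Fintype n]

theorem trace_mul_conjTranspose_self_eq_sum_norm_sq (A : Matrix m n 𝕜) :
    (A * Aᴴ).trace = ((∑ i, ∑ j, ‖A i j‖ ^ 2 : ℝ) : 𝕜) := by
  simp [trace, mul_apply, RCLike.mul_conj]

theorem trace_mul_self_eq_sum_eigenvalues_sq [DecidableEq n] {A : Matrix n n 𝕜}
    (hA : A.IsHermitian) :
    (A * A).trace = ((∑ i, hA.eigenvalues i ^ 2 : ℝ) : 𝕜) := by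
  set D : Matrix n n 𝕜 := diagonal (RCLike.ofReal ∘ hA.eigenvalues) with hD
  set U := hA.eigenvectorUnitary
  calc (A * A).trace = (Unitary.conjStarAlgAut 𝕜 _ U (D * D)).trace := by
        rw [map_mul, ← hA.spectral_theorem]
    _ = (D * D).trace := by
        rw [Unitary.conjStarAlgAut_apply, trace_mul_cycle, Unitary.coe_star_mul_self, one_mul]
    _ = ((∑ i, hA.eigenvalues i ^ 2 : ℝ) : 𝕜) := by
        simp [hD, trace_diagonal, sq]

theorem sum_norm_sq_eq_sum_eigenvalues_sq [DecidableEq n] {A : Matrix n n 𝕜}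
    (hA : A.IsHermitian) :
    ∑ i, ∑ j, ‖A i j‖ ^ 2 = ∑ i, hA.eigenvalues i ^ 2 := by
  apply RCLike.ofReal_injective (K := 𝕜)
  rw [← trace_mul_conjTranspose_self_eq_sum_norm_sq, hA.eq, trace_mul_self_eq_sum_eigenvalues_sq hA]

end FrobeniusNorm

theorem det_bound_matrix_general {𝕜 : Type*} [RCLike 𝕜] {A : Matrix (Fin 3) (Fin 3) 𝕜}
    (hA : A.IsHermitian) (htr : A.trace = 0) :
    ‖A.det‖ ≤ √6 / 18 * (∑ i, ∑ j, ‖A i j‖ ^ 2) ^ ((3 : ℝ) / 2) := by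
  have sum_eigenvalues : ∑ i, hA.eigenvalues i = 0 := by
    rw [hA.trace_eq_sum_eigenvalues] at htr
    exact_mod_cast htr
  have norm_det : ‖A.det‖ = |∏ i, hA.eigenvalues i| := by
    rw [hA.det_eq_prod_eigenvalues, ← RCLike.ofReal_prod, RCLike.norm_ofReal]
  rw [norm_det, sum_norm_sq_eq_sum_eigenvalues_sq hA, Fin.prod_univ_three, Fin.sum_univ_three]
  rw [Fin.sum_univ_three] at sum_eigenvalues
  exact abs_prod_le_sum_sq_rpow_of_add_eq_zero sum_eigenvalues

/-- Matrix form of inequality (2.9): a trace-free real symmetric 3×3 matrix satisfies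
`det A ≤ (√6/18)‖A‖³` (Frobenius norm). -/
theorem det_bound_matrix (A : Matrix (Fin 3) (Fin 3) ℝ)
    (hA : Aᵀ = A) (htr : A.trace = 0) :
    A.det ≤ (Real.sqrt 6 / 18) * (∑ i, ∑ j, (A i j) ^ 2) ^ ((3 : ℝ) / 2) := by
  have hH : A.IsHermitian := A.conjTranspose_eq_transpose_of_trivial.trans hA
  simpa only [Real.norm_eq_abs, sq_abs] using
    (le_abs_self A.det).trans (det_bound_matrix_general hH htr)
end

section
/- Let λ a : Fin 3 → ℝ with ∑ i, λ i = 0 and a i ≥ 0 for every i. Then ∑ i, λ i * a i ≤ (Real.sqrt 6 / 3) * Real.sqrt (∑ i, (λ i)^2) * (∑ i, a i). -/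
/-!
If the `l i` sum to zero, each `l i` is minus the sum of the other `n - 1` entries, so
Cauchy–Schwarz over those entries bounds it by `√((n - 1) / n) * |l|`. A combination of the `l i`
with nonnegative weights is then at most this bound times the total weight. For `n = 3` the
constant is `√(2 / 3) = √6 / 3`.
-/

open Finset

variable {ι : Type*} {s : Finset ι} {i : ι}

theorem card_mul_sq_le_of_sum_eq_zero {R : Type*} [CommRing R] [LinearOrder R]
    [IsStrictOrderedRing R] {l : ι → R} (hl : ∑ j ∈ s, l j = 0) (hi : i ∈ s) :
    #s * l i ^ 2 ≤ (#s - 1) * ∑ j ∈ s, l j ^ 2 := by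
  classical
  have sum_erase : ∑ j ∈ s.erase i, l j = -l i :=
    eq_neg_of_add_eq_zero_left ((sum_erase_add s l hi).trans hl)
  have card_erase : (#(s.erase i) : R) = #s - 1 := cast_card_erase_of_mem hi
  have cauchy_schwarz : l i ^ 2 ≤ (#s - 1) * ∑ j ∈ s.erase i, l j ^ 2 := by
    simpa only [sum_erase, card_erase, neg_sq] using
      sq_sum_le_card_mul_sum_sq (s := s.erase i) (f := l)
  calc #s * l i ^ 2 = (#s - 1) * l i ^ 2 + l i ^ 2 := by ring
    _ ≤ (#s - 1) * l i ^ 2 + (#s - 1) * ∑ j ∈ s.erase i, l j ^ 2 := by gcongr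
    _ = (#s - 1) * ∑ j ∈ s, l j ^ 2 := by
      rw [← mul_add, add_sum_erase s (fun j ↦ l j ^ 2) hi]

theorem abs_le_sqrt_mul_sqrt_sum_sq_of_sum_eq_zero {l : ι → ℝ} (hl : ∑ j ∈ s, l j = 0)
    (hi : i ∈ s) :
    |l i| ≤ √((#s - 1) / #s) * √(∑ j ∈ s, l j ^ 2) := by
  have card_pos : (0 : ℝ) < #s := mod_cast card_pos.2 ⟨i, hi⟩
  rw [← Real.sqrt_mul' _ (sum_nonneg fun j _ ↦ sq_nonneg (l j))]
  refine Real.abs_le_sqrt ?_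
  rw [div_mul_eq_mul_div, le_div_iff₀' card_pos]
  exact card_mul_sq_le_of_sum_eq_zero hl hi

theorem weighted_eigenvalue_bound_general {l a : ι → ℝ} (hl : ∑ i ∈ s, l i = 0)
    (ha : ∀ i ∈ s, 0 ≤ a i) :
    ∑ i ∈ s, l i * a i ≤ √((#s - 1) / #s) * √(∑ i ∈ s, l i ^ 2) * ∑ i ∈ s, a i := by
  rw [mul_sum]
  exact sum_le_sum fun i hi ↦ mul_le_mul_of_nonneg_right
    (le_of_abs_le (abs_le_sqrt_mul_sqrt_sum_sq_of_sum_eq_zero hl hi)) (ha i hi)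

theorem sqrt_two_div_three : √(2 / 3) = √6 / 3 := by
  rw [Real.sqrt_eq_iff_mul_self_eq (by norm_num) (by positivity), div_mul_div_comm,
    Real.mul_self_sqrt (by norm_num)]
  norm_num

/-- Core optimization inequality in Lemma 3.2: for `λ` summing to zero and
nonnegative weights `a`, `⟨λ, a⟩ ≤ (√6/3)|λ|(∑ a)`. -/
theorem weighted_eigenvalue_bound (l a : Fin 3 → ℝ)
    (hl : ∑ i, l i = 0) (ha : ∀ i, 0 ≤ a i) :
    ∑ i, l i * a i ≤
      (Real.sqrt 6 / 3) * Real.sqrt (∑ i, (l i) ^ 2) * (∑ i, a i) := by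
  have card_ratio : ((#(univ : Finset (Fin 3)) : ℝ) - 1) / #(univ : Finset (Fin 3)) = 2 / 3 := by
    norm_num
  simpa only [card_ratio, sqrt_two_div_three] using
    weighted_eigenvalue_bound_general hl fun i _ ↦ ha i
end

section
/- Let λ a : Fin 3 → ℝ with λ 0 ≥ λ 1 ≥ λ 2, ∑ i, λ i = 0, λ ≠ 0, a i ≥ 0 for every i, and a ≠ 0. Then equality ∑ i, λ i * a i = (Real.sqrt 6 / 3) * Real.sqrt (∑ i, (λ i)^2) * (∑ i, a i) holds if and only if a 1 = 0, a 2 = 0, and λ 1 = λ 2 = −(λ 0)/2. -/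
/-!
Each entry of a real vector `l` of length `n` with sum zero is minus the sum of the other `n - 1`
entries, so Cauchy-Schwarz bounds it by `√((n - 1) / n) * |l|`, with equality exactly when it is
nonnegative and the other entries agree. Two entries of a nonzero vector cannot both attain the
bound, so a nonnegative weight that turns the weighted sum into an equality sits on a single, hence
the largest, entry. For `n = 3` the constant is `√6 / 3`.
-/

open Finset

section Order

variable {ι : Type*}

theorem nonneg_of_sum_eq_zero_of_forall_le {M : Type*} [AddCommMonoid M] [LinearOrder M]
    [IsOrderedCancelAddMonoid M] [Fintype ι] {f : ι → M} {i : ι} (hf : ∑ j, f j = 0)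
    (hi : ∀ j, f j ≤ f i) : 0 ≤ f i := by
  have hsum : ∑ _j : ι, (0 : M) ≤ ∑ j, f j := by rw [sum_const_zero, hf]
  obtain ⟨j, -, hj⟩ := exists_le_of_sum_le ⟨i, mem_univ i⟩ hsum
  exact hj.trans (hi j)

theorem sum_mul_eq_mul_sum_iff_of_le {R : Type*} [NonUnitalNonAssocSemiring R] [PartialOrder R]
    [IsOrderedCancelAddMonoid R] [MulPosMono R] [IsRightCancelMulZero R] {s : Finset ι}
    {f w : ι → R} {c : R} (hf : ∀ i ∈ s, f i ≤ c) (hw : ∀ i ∈ s, 0 ≤ w i) :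
    ∑ i ∈ s, f i * w i = c * ∑ i ∈ s, w i ↔ ∀ i ∈ s, f i = c ∨ w i = 0 := by
  rw [mul_sum, sum_eq_sum_iff_of_le fun i hi ↦ mul_le_mul_of_nonneg_right (hf i hi) (hw i hi)]
  simp only [mul_eq_mul_right_iff]

end Order

section SumOfSquares

variable {ι K : Type*}

theorem card_mul_sum_sub_mean_sq [Field K] [CharZero K] (s : Finset ι) (f : ι → K) :
    #s * ∑ i ∈ s, (f i - (∑ j ∈ s, f j) / #s) ^ 2 = #s * ∑ i ∈ s, f i ^ 2 - (∑ i ∈ s, f i) ^ 2 := by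
  obtain rfl | hs := s.eq_empty_or_nonempty
  · simp
  have hcard : (#s : K) ≠ 0 := Nat.cast_ne_zero.2 hs.card_ne_zero
  simp only [sub_sq, sum_add_distrib, sum_sub_distrib, ← sum_mul, ← mul_sum, sum_const,
    nsmul_eq_mul]
  field_simp
  ring

theorem card_mul_sum_erase_sq_sub_of_sum_eq_zero {R : Type*} [CommRing R] [Fintype ι]
    [DecidableEq ι] {l : ι → R} (hl : ∑ i, l i = 0) (i : ι) :
    #(univ.erase i) * ∑ j ∈ univ.erase i, l j ^ 2 - (∑ j ∈ univ.erase i, l j) ^ 2 =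
      (Fintype.card ι - 1) * ∑ j, l j ^ 2 - Fintype.card ι * l i ^ 2 := by
  rw [sum_erase_eq_sub (mem_univ i), sum_erase_eq_sub (mem_univ i), hl,
    cast_card_erase_of_mem (mem_univ i), card_univ]
  ring

variable [Field K] [LinearOrder K] [IsStrictOrderedRing K]

theorem sq_sum_eq_card_mul_sum_sq_iff {s : Finset ι} {f : ι → K} :
    (∑ i ∈ s, f i) ^ 2 = #s * ∑ i ∈ s, f i ^ 2 ↔ ∀ i ∈ s, f i = (∑ j ∈ s, f j) / #s := by
  obtain rfl | hs := s.eq_empty_or_nonempty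
  · simp
  have hcard : (#s : K) ≠ 0 := Nat.cast_ne_zero.2 hs.card_ne_zero
  rw [eq_comm, ← sub_eq_zero, ← card_mul_sum_sub_mean_sq, mul_eq_zero_iff_left hcard,
    sum_eq_zero_iff_of_nonneg fun i _ ↦ sq_nonneg _]
  simp only [sq_eq_zero_iff, sub_eq_zero]

variable [Fintype ι] {l : ι → K}

theorem sq_le_mul_sum_sq_of_sum_eq_zero (hl : ∑ i, l i = 0) (i : ι) :
    l i ^ 2 ≤ (Fintype.card ι - 1) / Fintype.card ι * ∑ j, l j ^ 2 := by
  classical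
  have hn : 0 < (Fintype.card ι : K) := Nat.cast_pos.2 (Fintype.card_pos_iff.2 ⟨i⟩)
  rw [div_mul_eq_mul_div, le_div_iff₀' hn, ← sub_nonneg,
    ← card_mul_sum_erase_sq_sub_of_sum_eq_zero hl, sub_nonneg]
  exact sq_sum_le_card_mul_sum_sq

theorem sq_eq_mul_sum_sq_iff_of_sum_eq_zero (hl : ∑ i, l i = 0) (i : ι) :
    l i ^ 2 = (Fintype.card ι - 1) / Fintype.card ι * ∑ j, l j ^ 2 ↔
      ∀ j ≠ i, l j = -l i / (Fintype.card ι - 1) := by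
  classical
  have hn : (Fintype.card ι : K) ≠ 0 := Nat.cast_ne_zero.2 (Fintype.card_pos_iff.2 ⟨i⟩).ne'
  rw [div_mul_eq_mul_div, eq_div_iff hn, mul_comm, eq_comm, ← sub_eq_zero,
    ← card_mul_sum_erase_sq_sub_of_sum_eq_zero hl, sub_eq_zero, eq_comm,
    sq_sum_eq_card_mul_sum_sq_iff, sum_erase_eq_sub (mem_univ i), hl, zero_sub,
    cast_card_erase_of_mem (mem_univ i), card_univ]
  simp only [mem_erase, mem_univ, and_true]

end SumOfSquares

section Real

variable {ι : Type*} [Fintype ι] {l : ι → ℝ}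

theorem le_sqrt_mul_sqrt_sum_sq_of_sum_eq_zero (hl : ∑ i, l i = 0) (i : ι) :
    l i ≤ √((Fintype.card ι - 1) / Fintype.card ι) * √(∑ j, l j ^ 2) := by
  rw [← Real.sqrt_mul' _ (by positivity)]
  exact Real.le_sqrt_of_sq_le (sq_le_mul_sum_sq_of_sum_eq_zero hl i)

theorem eq_sqrt_mul_sqrt_sum_sq_iff_of_sum_eq_zero (hl : ∑ i, l i = 0) (i : ι) :
    l i = √((Fintype.card ι - 1) / Fintype.card ι) * √(∑ j, l j ^ 2) ↔
      0 ≤ l i ∧ ∀ j ≠ i, l j = -l i / (Fintype.card ι - 1) := by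
  rw [← Real.sqrt_mul' _ (by positivity), ← sq_eq_mul_sum_sq_iff_of_sum_eq_zero hl]
  have hnonneg := (sq_nonneg (l i)).trans (sq_le_mul_sum_sq_of_sum_eq_zero hl i)
  constructor
  · intro h
    exact ⟨h ▸ Real.sqrt_nonneg _, by rw [h, Real.sq_sqrt hnonneg]⟩
  · rintro ⟨hli, h⟩
    rw [← h, Real.sqrt_sq hli]

theorem eq_of_eq_sqrt_mul_sqrt_sum_sq_of_sum_eq_zero (hl : ∑ i, l i = 0) (hl₀ : l ≠ 0) {i j : ι}
    (hi : l i = √((Fintype.card ι - 1) / Fintype.card ι) * √(∑ k, l k ^ 2))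
    (hj : l j = √((Fintype.card ι - 1) / Fintype.card ι) * √(∑ k, l k ^ 2)) : i = j := by
  by_contra hij
  obtain ⟨hnonneg, hothers⟩ := (eq_sqrt_mul_sqrt_sum_sq_iff_of_sum_eq_zero hl i).1 hi
  have hcard : (1 : ℝ) < Fintype.card ι :=
    Nat.one_lt_cast.2 (Fintype.one_lt_card_iff.2 ⟨i, j, hij⟩)
  have hli : l i = 0 := by
    refine le_antisymm ?_ hnonneg
    calc l i = -l i / (Fintype.card ι - 1) := by rw [← hothers j (Ne.symm hij), hi, hj]
      _ ≤ 0 := div_nonpos_of_nonpos_of_nonneg (neg_nonpos.2 hnonneg) (sub_nonneg.2 hcard.le)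
  refine hl₀ (funext fun k ↦ ?_)
  obtain rfl | hk := eq_or_ne k i
  · exact hli
  · rw [hothers k hk, hli, neg_zero, zero_div, Pi.zero_apply]

theorem weighted_eigenvalue_bound_equality_general {a : ι → ℝ} {i : ι} (hi : ∀ j, l j ≤ l i)
    (hl : ∑ j, l j = 0) (hl₀ : l ≠ 0) (ha : ∀ j, 0 ≤ a j) (ha₀ : a ≠ 0) :
    ∑ j, l j * a j =
        √((Fintype.card ι - 1) / Fintype.card ι) * √(∑ j, l j ^ 2) * ∑ j, a j ↔
      (∀ j ≠ i, a j = 0) ∧ ∀ j ≠ i, l j = -l i / (Fintype.card ι - 1) := by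
  have hbound := le_sqrt_mul_sqrt_sum_sq_of_sum_eq_zero hl
  have heq_iff := eq_sqrt_mul_sqrt_sum_sq_iff_of_sum_eq_zero hl i
  rw [sum_mul_eq_mul_sum_iff_of_le (fun j _ ↦ hbound j) fun j _ ↦ ha j]
  simp only [mem_univ, true_imp_iff]
  constructor
  · intro h
    obtain ⟨k, hk⟩ := Function.ne_iff.1 ha₀
    have htop := (hbound i).antisymm (((h k).resolve_right hk).ge.trans (hi k))
    refine ⟨fun j hj ↦ (h j).resolve_left fun hlj ↦ hj ?_, (heq_iff.1 htop).2⟩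
    exact eq_of_eq_sqrt_mul_sqrt_sum_sq_of_sum_eq_zero hl hl₀ hlj htop
  · rintro ⟨ha_others, hl_others⟩ j
    obtain rfl | hj := eq_or_ne j i
    · exact .inl (heq_iff.2 ⟨nonneg_of_sum_eq_zero_of_forall_le hl hi, hl_others⟩)
    · exact .inr (ha_others j hj)

theorem sqrt_card_fin_three_sub_one_div :
    √(((Fintype.card (Fin 3) : ℝ) - 1) / Fintype.card (Fin 3)) = √6 / 3 := by
  rw [Fintype.card_fin, show (((3 : ℕ) : ℝ) - 1) / (3 : ℕ) = 6 / 3 ^ 2 by norm_num,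
    Real.sqrt_div' _ (by positivity), Real.sqrt_sq (by positivity)]

end Real

/-- Equality case of the core optimization inequality in Lemma 3.2. -/
theorem weighted_eigenvalue_bound_equality (l a : Fin 3 → ℝ)
    (h01 : l 0 ≥ l 1) (h12 : l 1 ≥ l 2) (hl : ∑ i, l i = 0) (hlne : l ≠ 0)
    (ha : ∀ i, 0 ≤ a i) (hane : a ≠ 0) :
    (∑ i, l i * a i =
        (Real.sqrt 6 / 3) * Real.sqrt (∑ i, (l i) ^ 2) * (∑ i, a i)) ↔
      (a 1 = 0 ∧ a 2 = 0 ∧ l 1 = -(l 0) / 2 ∧ l 2 = -(l 0) / 2) := by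
  have htop : ∀ j, l j ≤ l 0 := by simp [Fin.forall_fin_succ, h01, h12.le.trans h01]
  rw [← sqrt_card_fin_three_sub_one_div,
    weighted_eigenvalue_bound_equality_general htop hl hlne ha hane]
  norm_num [Fin.forall_fin_succ, and_assoc]
end
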